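/- Let α, a, x, y, z, t, ω ∈ ℂ and r̃, s̃ ∈ ℤ with r̃ > s̃, ω ≠ 0, x ≠ 0, max{|xω|, |xt|} < 1, and y ω q^m ≠ 1 for all integers m ≥ 0. Then the double series ∑_{n=0}^∞ ∑_{m=0}^∞ L̃_{n+m}^{(r̃,s̃)}(α,x,y,z,a) · (t^n/(q;q)_n) · (ω^m/(q;q)_m) converges absolutely and its sum equals ((yω;q)_∞/(xω;q)_∞) · ∑_{k=0}^∞ ∑_{j=0}^{k} q^{kα + r̃·C(k,2) − s̃·C(k+1,2)} · ((−q^{−α};q)_k (a;q)_k (ωz)^k / ((−q;q)_k (q;q)_{k−j})) · ((xω;q)_j (t/ω)^j / ((yω;q)_j (q;q)_j)) · ₂Φ₁[y/x, 0; yω q^j; q; xt]. -/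

import Mathlib

noncomputable section

/-- The q-shifted factorial `(a;q)_n`. -/
def qPoch (q a : ℂ) (n : ℕ) : ℂ := ∏ j ∈ Finset.range n, (1 - a * q ^ j)

/-- The infinite q-shifted factorial `(a;q)_∞`. -/
def qPochInf (q a : ℂ) : ℂ := ∏' j : ℕ, (1 - a * q ^ j)

/-- The q-binomial coefficient `[n k]_q`. -/
def qBinom (q : ℂ) (n k : ℕ) : ℂ := qPoch q q n / (qPoch q q k * qPoch q q (n - k))

/-- The Cauchy polynomials `p_n(x,y)`. -/
def cauchyP (q x y : ℂ) (n : ℕ) : ℂ := ∏ j ∈ Finset.range n, (x - q ^ j * y)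

/-- The generalized q-binomial coefficient `[α k]_{-q}`. -/
def genQBinom (q α : ℂ) (k : ℕ) : ℂ :=
  qPoch q (-(q ^ (-α))) k / qPoch q (-q) k * q ^ (α * (k : ℂ) - (k.choose 2 : ℂ))

/-- The generalized q-polynomials `L̃_n^{(r,s)}(α,x,y,z,a)`. -/
def Ltil (q : ℂ) (r s : ℤ) (α x y z a : ℂ) (n : ℕ) : ℂ :=
  ∑ k ∈ Finset.range (n + 1),
    qBinom q n k * genQBinom q α k *
      q ^ (r * (k.choose 2 : ℤ) - s * ((k + 1).choose 2 : ℤ) + (k.choose 2 : ℤ)) *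
      qPoch q a k * cauchyP q x y (n - k) * z ^ k

/-- The basic hypergeometric series `₂Φ₁[a,b;c;q;z]`. -/
def Phi21 (q a b c z : ℂ) : ℂ :=
  ∑' n : ℕ, qPoch q a n * qPoch q b n / (qPoch q c n * qPoch q q n) * z ^ n

/-- The basic hypergeometric series `₄Φ₃`. -/
def Phi43 (q a₁ a₂ a₃ a₄ b₁ b₂ b₃ z : ℂ) : ℂ :=
  ∑' n : ℕ, qPoch q a₁ n * qPoch q a₂ n * qPoch q a₃ n * qPoch q a₄ n /
    (qPoch q b₁ n * qPoch q b₂ n * qPoch q b₃ n * qPoch q q n) * z ^ n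

/-- The trivariate q-polynomials `F_n(x,y,z;q)`. -/
def Ftri (q x y z : ℂ) (n : ℕ) : ℂ :=
  (-1) ^ n * q ^ (-(n.choose 2 : ℤ)) *
    ∑ k ∈ Finset.range (n + 1),
      qBinom q n k * q ^ (k.choose 2) * (-z) ^ k * cauchyP q y x (n - k)

/-- The Hahn (Al-Salam–Carlitz) polynomials `φ_n^{(σ)}(x|q)`. -/
def hahnPhi (q σ x : ℂ) (n : ℕ) : ℂ :=
  ∑ k ∈ Finset.range (n + 1), qBinom q n k * qPoch q σ k * x ^ k

/-- The q-derivative operator `D_a`. -/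
def Dq (q : ℂ) (f : ℂ → ℂ) : ℂ → ℂ := fun a => (f a - f (q * a)) / a

/-- The homogeneous q-difference operator `D_{xy}`. -/
def Dxy (q : ℂ) (f : ℂ → ℂ → ℂ) : ℂ → ℂ → ℂ :=
  fun x y => (f x (y / q) - f (q * x) y) / (x - y / q)



open Filter Topology Finset

lemma qP_succ (q a : ℂ) (n : ℕ) : qPoch q a (n+1) = qPoch q a n * (1 - a * q ^ n) := by
  simp [qPoch, Finset.prod_range_succ]

lemma qP_zero (q a : ℂ) : qPoch q a 0 = 1 := by simp [qPoch]

lemma qP_add (q a : ℂ) (n m : ℕ) : qPoch q a (n+m) = qPoch q a n * qPoch q (a * q ^ n) m := by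
  simp only [qPoch, Finset.prod_range_add]
  congr 1
  refine Finset.prod_congr rfl fun j _ => by ring

lemma qP_ne (q a : ℂ) (n : ℕ) (h : ∀ m : ℕ, a * q ^ m ≠ 1) : qPoch q a n ≠ 0 := by
  rw [qPoch, Finset.prod_ne_zero_iff]
  intro j _
  exact sub_ne_zero.mpr (h j).symm

lemma qne_one_of_lt {q a : ℂ} (hq1 : ‖q‖ < 1) (ha : ‖a‖ < 1) (m : ℕ) : a * q ^ m ≠ 1 := by
  intro h
  have h1 : ‖a * q ^ m‖ = 1 := by rw [h]; simp
  rw [norm_mul, norm_pow] at h1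
  have : ‖a‖ * ‖q‖ ^ m ≤ ‖a‖ * 1 := by
    gcongr
    exact pow_le_one₀ (norm_nonneg _) hq1.le
  linarith

lemma sumnorm {q : ℂ} (hq1 : ‖q‖ < 1) (a : ℂ) : Summable (fun j : ℕ => ‖-(a * q ^ j)‖) := by
  simp only [norm_neg, norm_mul, norm_pow]
  exact (summable_geometric_of_lt_one (norm_nonneg _) hq1).mul_left _

lemma qmult {q : ℂ} (hq1 : ‖q‖ < 1) (a : ℂ) : Multipliable (fun j : ℕ => 1 - a * q ^ j) := by
  have := multipliable_one_add_of_summable (sumnorm hq1 a)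
  simpa [sub_eq_add_neg] using this

lemma qP_tendsto {q : ℂ} (hq1 : ‖q‖ < 1) (a : ℂ) :
    Tendsto (qPoch q a) atTop (𝓝 (qPochInf q a)) :=
  (qmult hq1 a).hasProd.tendsto_prod_nat

lemma qInf_ne {q : ℂ} (hq1 : ‖q‖ < 1) (a : ℂ) (h : ∀ m : ℕ, a * q ^ m ≠ 1) :
    qPochInf q a ≠ 0 := by
  have := tprod_one_add_ne_zero_of_summable (f := fun j : ℕ => -(a * q ^ j))
    (fun i => by rw [← sub_eq_add_neg]; exact sub_ne_zero.mpr (h i).symm) (sumnorm hq1 a)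
  simpa [qPochInf, sub_eq_add_neg] using this

lemma qInf_split {q : ℂ} (hq1 : ‖q‖ < 1) (a : ℂ) (n : ℕ) :
    qPoch q a n * qPochInf q (a * q ^ n) = qPochInf q a := by
  have h := (qP_tendsto hq1 (a * q ^ n)).const_mul (qPoch q a n)
  have h2 : Tendsto (fun m => qPoch q a (n + m)) atTop (𝓝 (qPochInf q a)) := by
    have := (tendsto_add_atTop_iff_nat n).mpr (qP_tendsto hq1 a)
    simpa [add_comm] using this
  simp only [qP_add] at h2
  exact tendsto_nhds_unique h h2

lemma qP_bdd {q : ℂ} (hq1 : ‖q‖ < 1) (a : ℂ) : ∃ C : ℝ, 0 < C ∧ ∀ n, ‖qPoch q a n‖ ≤ C := by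
  obtain ⟨C, hC⟩ := ((qP_tendsto hq1 a).norm).bddAbove_range
  refine ⟨max C 1, by positivity, fun n => le_max_of_le_left (hC ⟨n, rfl⟩)⟩

lemma qP_inv_bdd {q : ℂ} (hq1 : ‖q‖ < 1) (a : ℂ) (h : ∀ m : ℕ, a * q ^ m ≠ 1) :
    ∃ C : ℝ, 0 < C ∧ ∀ n, ‖(qPoch q a n)⁻¹‖ ≤ C := by
  obtain ⟨C, hC⟩ := (((qP_tendsto hq1 a).inv₀ (qInf_ne hq1 a h)).norm).bddAbove_range
  refine ⟨max C 1, by positivity, fun n => le_max_of_le_left (hC ⟨n, rfl⟩)⟩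

lemma tsum_anti {f : ℕ × ℕ → ℂ} (hf : Summable f) :
    ∑' p, f p = ∑' N, ∑ p ∈ antidiagonal N, f p := by
  conv_rhs => congr; ext; rw [← Finset.sum_finset_coe, ← tsum_fintype (L := .unconditional _)]
  rw [← HasAntidiagonal.sigmaAntidiagonalEquivProd.tsum_eq f]
  exact (HasAntidiagonal.sigmaAntidiagonalEquivProd.summable_iff.mpr hf).tsum_sigma'
    (fun n ↦ (hasSum_fintype _).summable)

/-- q-exponential term -/
def ee (q t : ℂ) (n : ℕ) : ℂ := t ^ n / qPoch q q n

lemma qq_ne {q : ℂ} (hq1 : ‖q‖ < 1) (n : ℕ) : qPoch q q n ≠ 0 :=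
  qP_ne q q n (qne_one_of_lt hq1 hq1)

lemma ee_succ {q : ℂ} (hq1 : ‖q‖ < 1) (t : ℂ) (n : ℕ) :
    (1 - q ^ (n+1)) * ee q t (n+1) = t * ee q t n := by
  have h1 := qq_ne hq1 n
  have h2 := qq_ne hq1 (n+1)
  have h3 := qP_succ q q n
  have h4 : (1 - q * q ^ n) ≠ 0 := by
    intro h; rw [h] at h3; simp at h3; exact h2 h3
  simp only [ee]
  rw [h3]
  field_simp
  ring

lemma ee_mul (q t c : ℂ) (n : ℕ) : ee q (t * c) n = c ^ n * ee q t n := by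
  simp only [ee]; ring

def RR (q t : ℂ) (φ : ℂ → ℂ) (w : ℂ) (k : ℕ) : ℂ :=
  ∑ p ∈ antidiagonal k, ee q t p.1 * ee q w p.2 * φ (w * q ^ p.1)

lemma RR_succ {q : ℂ} (hq1 : ‖q‖ < 1) (t : ℂ) (φ : ℂ → ℂ) (w : ℂ) (k : ℕ) :
    (1 - q ^ (k+1)) * RR q t φ w (k+1) = w * RR q t φ w k + t * RR q t φ (w * q) k := by
  have e : (1 - q ^ (k+1)) * RR q t φ w (k+1) =
     (∑ p ∈ antidiagonal (k+1), ee q t p.1 * ((1 - q ^ p.2) * ee q w p.2) * φ (w * q ^ p.1))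
     + ∑ p ∈ antidiagonal (k+1), ((1 - q ^ p.1) * ee q t p.1) * (q ^ p.2 * ee q w p.2) *
        φ (w * q ^ p.1) := by
    rw [RR, Finset.mul_sum, ← Finset.sum_add_distrib]
    refine Finset.sum_congr rfl fun p hp => ?_
    rw [← mem_antidiagonal.mp hp, pow_add]
    ring
  rw [e, Finset.Nat.sum_antidiagonal_succ', Finset.Nat.sum_antidiagonal_succ]
  simp only [ee_succ hq1, pow_zero, sub_self, zero_mul, mul_zero, zero_add, RR, Finset.mul_sum]
  congr 1
  · refine Finset.sum_congr rfl fun p hp => by ring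
  · refine Finset.sum_congr rfl fun p hp => ?_
    rw [ee_mul, show w * q ^ (p.1+1) = w * q * q ^ p.1 by ring]
    ring

def HH (q t w : ℂ) (N : ℕ) : ℂ := qPoch q q N * RR q t (fun _ => 1) w N

lemma HH_succ {q : ℂ} (hq1 : ‖q‖ < 1) (t w : ℂ) (N : ℕ) :
    HH q t w (N+1) = w * HH q t w N + t * HH q t (w * q) N := by
  have := RR_succ hq1 t (fun _ => 1) w N
  simp only [HH, qP_succ]
  rw [show q * q ^ N = q ^ (N+1) by ring, mul_assoc, this]
  ring

lemma HH_add {q : ℂ} (hq1 : ‖q‖ < 1) (t : ℂ) (M k : ℕ) : ∀ w,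
    HH q t w (k + M) = qPoch q q k * RR q t (fun w => HH q t w M) w k := by
  induction k with
  | zero => intro w; simp [RR, ee, qP_zero]
  | succ k ih =>
    intro w
    rw [show k + 1 + M = k + M + 1 by ring, HH_succ hq1, ih, ih, qP_succ,
      show q * q ^ k = q ^ (k+1) by ring, mul_assoc, RR_succ hq1]
    ring

/-- q-binomial theorem -/
lemma qbin_summable {q : ℂ} (hq1 : ‖q‖ < 1) (b w : ℂ) (hw : ‖w‖ < 1) :
    Summable (fun m => ‖qPoch q b m * ee q w m‖) := by
  obtain ⟨C, hC, h1⟩ := qP_bdd hq1 b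
  obtain ⟨D, hD, h2⟩ := qP_inv_bdd hq1 q (qne_one_of_lt hq1 hq1)
  refine Summable.of_nonneg_of_le (fun _ => norm_nonneg _) (fun m => ?_)
    ((summable_geometric_of_lt_one (norm_nonneg _) hw).mul_left (C * D))
  rw [ee, div_eq_mul_inv, norm_mul, norm_mul, norm_pow]
  calc _ ≤ C * (‖w‖ ^ m * D) := by gcongr; exact h1 m; exact h2 m
    _ = _ := by ring

lemma qbin_rec {q : ℂ} (hq1 : ‖q‖ < 1) (b w : ℂ) (hw : ‖w‖ < 1) :
    (1 - w) * ∑' m, qPoch q b m * ee q w m =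
      (1 - b * w) * ∑' m, qPoch q b m * ee q (w * q) m := by
  have hwq : ‖w * q‖ < 1 := by
    rw [norm_mul]; nlinarith [norm_nonneg w, norm_nonneg q]
  have s1 := (qbin_summable hq1 b w hw).of_norm
  have s2 := (qbin_summable hq1 b (w*q) hwq).of_norm
  have key : ∑' m, (qPoch q b m * ee q w m - qPoch q b m * ee q (w * q) m) =
      ∑' m, (w * (qPoch q b m * ee q w m) - b * w * (qPoch q b m * ee q (w*q) m)) := by
    rw [(s1.sub s2).tsum_eq_zero_add]
    simp only [ee_mul, pow_zero, one_mul, sub_self, zero_add]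
    refine tsum_congr fun m => ?_
    have := ee_succ hq1 w m
    rw [qP_succ]
    linear_combination (qPoch q b m * (1 - b * q ^ m)) * this
  rw [s1.tsum_sub s2, (s1.mul_left w).tsum_sub (s2.mul_left (b*w)), tsum_mul_left,
    tsum_mul_left] at key
  linear_combination key

lemma norm_mul_qpow {q : ℂ} (hq1 : ‖q‖ < 1) (w : ℂ) (n : ℕ) : ‖w * q ^ n‖ ≤ ‖w‖ := by
  rw [norm_mul, norm_pow]
  exact mul_le_of_le_one_right (norm_nonneg _) (pow_le_one₀ (norm_nonneg _) hq1.le)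

lemma qbin {q : ℂ} (hq1 : ‖q‖ < 1) (b w : ℂ) (hw : ‖w‖ < 1) :
    ∑' m, qPoch q b m * ee q w m = qPochInf q (b * w) / qPochInf q w := by
  have it : ∀ n, qPoch q w n * ∑' m, qPoch q b m * ee q w m =
      qPoch q (b * w) n * ∑' m, qPoch q b m * ee q (w * q ^ n) m := by
    intro n
    induction n with
    | zero => simp [qP_zero]
    | succ n ih =>
      have := qbin_rec hq1 b (w * q ^ n) ((norm_mul_qpow hq1 w n).trans_lt hw)
      rw [qP_succ, qP_succ, pow_succ, ← mul_assoc w]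
      linear_combination (1 - w * q ^ n) * ih + qPoch q (b * w) n * this
  have l1 := (qP_tendsto hq1 w).mul_const (∑' m, qPoch q b m * ee q w m)
  have l2 : Tendsto (fun n : ℕ => ∑' m, qPoch q b m * ee q (w * q ^ n) m) atTop
      (𝓝 (∑' m, if m = 0 then 1 else 0)) := by
    refine tendsto_tsum_of_dominated_convergence (qbin_summable hq1 b w hw) ?_ ?_
    · intro m
      simp only [ee_mul]
      rcases m with _ | m
      · simp [qP_zero, ee]
      · have h0 : Tendsto (fun n : ℕ => q ^ n) atTop (𝓝 0) :=
          tendsto_pow_atTop_nhds_zero_of_norm_lt_one hq1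
        have := ((h0.pow (m+1)).mul_const (ee q w (m+1))).const_mul (qPoch q b (m+1))
        simpa using this
    · refine Eventually.of_forall fun n m => ?_
      rw [ee_mul]
      simp only [norm_mul, norm_pow]
      gcongr
      refine mul_le_of_le_one_left (norm_nonneg _) ?_
      exact pow_le_one₀ (by positivity) (pow_le_one₀ (norm_nonneg _) hq1.le)
  rw [tsum_ite_eq] at l2
  have l3 := (qP_tendsto hq1 (b * w)).mul l2
  simp only [it] at l1
  have := tendsto_nhds_unique l1 l3
  rw [eq_div_iff (qInf_ne hq1 w (qne_one_of_lt hq1 hw)), mul_comm, this, mul_one]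

lemma cauchy_eq (q : ℂ) {x : ℂ} (y : ℂ) (hx : x ≠ 0) (n : ℕ) :
    cauchyP q x y n = x ^ n * qPoch q (y / x) n := by
  rw [cauchyP, qPoch, Finset.pow_eq_prod_const, ← Finset.prod_mul_distrib]
  refine Finset.prod_congr rfl fun j _ => ?_
  field_simp

lemma ee_bdd {q : ℂ} (hq1 : ‖q‖ < 1) : ∃ D : ℝ, 0 < D ∧ ∀ t n, ‖ee q t n‖ ≤ D * ‖t‖ ^ n := by
  obtain ⟨D, hD, h2⟩ := qP_inv_bdd hq1 q (qne_one_of_lt hq1 hq1)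
  refine ⟨D, hD, fun t n => ?_⟩
  rw [ee, div_eq_mul_inv, norm_mul, norm_pow, mul_comm]
  gcongr
  exact h2 n

lemma cauchy_bdd {q : ℂ} (hq1 : ‖q‖ < 1) {x : ℂ} (y : ℂ) (hx : x ≠ 0) :
    ∃ D : ℝ, 0 < D ∧ ∀ n, ‖cauchyP q x y n‖ ≤ D * ‖x‖ ^ n := by
  obtain ⟨C, hC, h1⟩ := qP_bdd hq1 (y / x)
  refine ⟨C, hC, fun n => ?_⟩
  rw [cauchy_eq q y hx, norm_mul, norm_pow, mul_comm]
  gcongr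
  exact h1 n

/-- generic summability -/
lemma gen_summable {q : ℂ} (hq1 : ‖q‖ < 1) {x t w : ℂ} (hxt : ‖x * t‖ < 1) (hxw : ‖x * w‖ < 1)
    (f : ℕ → ℂ) (D : ℝ) (hf : ∀ n, ‖f n‖ ≤ D * ‖x‖ ^ n) :
    Summable (fun p : ℕ × ℕ => ‖f (p.1 + p.2) * ee q t p.1 * ee q w p.2‖) := by
  obtain ⟨E, hE, he⟩ := ee_bdd hq1
  have hs := ((summable_geometric_of_lt_one (norm_nonneg _) hxt).mul_of_nonneg
    (summable_geometric_of_lt_one (norm_nonneg _) hxw) (fun _ => by positivity)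
    (fun _ => by positivity)).mul_left (D * E * E)
  refine Summable.of_nonneg_of_le (fun _ => norm_nonneg _) (fun p => ?_) hs
  rw [norm_mul, norm_mul]
  have hD : 0 ≤ D * ‖x‖ ^ (p.1 + p.2) := (norm_nonneg _).trans (hf _)
  calc _ ≤ (D * ‖x‖ ^ (p.1 + p.2)) * (E * ‖t‖ ^ p.1) * (E * ‖w‖ ^ p.2) := by
        gcongr
        · exact hf _
        · exact he _ _
        · exact he _ _
    _ = _ := by rw [norm_mul, norm_mul]; ring

lemma vHH {q : ℂ} (hq1 : ‖q‖ < 1) (x y t w : ℂ) (M : ℕ) :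
    cauchyP q x y M / qPoch q q M * HH q t w M =
      ∑ p ∈ antidiagonal M, cauchyP q x y (p.1 + p.2) * ee q t p.1 * ee q w p.2 := by
  have := qq_ne hq1 M
  rw [HH, RR, ← mul_assoc, div_mul_cancel₀ _ this, Finset.mul_sum]
  refine Finset.sum_congr rfl fun p hp => ?_
  rw [mem_antidiagonal.mp hp]; ring

lemma summable_anti {f : ℕ × ℕ → ℂ} (hf : Summable f) :
    Summable (fun N => ∑ p ∈ antidiagonal N, f p) := by
  conv => congr; ext; rw [← Finset.sum_finset_coe, ← tsum_fintype (L := .unconditional _)]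
  exact (HasAntidiagonal.sigmaAntidiagonalEquivProd.summable_iff.mpr hf).sigma'
    (fun n ↦ (hasSum_fintype _).summable)

lemma GG_summable {q : ℂ} (hq1 : ‖q‖ < 1) {x y t w : ℂ} (hx : x ≠ 0)
    (hxt : ‖x * t‖ < 1) (hxw : ‖x * w‖ < 1) :
    Summable (fun M => cauchyP q x y M / qPoch q q M * HH q t w M) := by
  obtain ⟨D, hD, hd⟩ := cauchy_bdd hq1 y hx
  simp only [vHH hq1]
  exact summable_anti (gen_summable hq1 hxt hxw _ D hd).of_norm

lemma GG {q : ℂ} (hq1 : ‖q‖ < 1) {x y t w : ℂ} (hx : x ≠ 0)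
    (hxt : ‖x * t‖ < 1) (hxw : ‖x * w‖ < 1) (hyw : ∀ m : ℕ, y * w * q ^ m ≠ 1) :
    ∑' M, cauchyP q x y M / qPoch q q M * HH q t w M =
      qPochInf q (y * w) / qPochInf q (x * w) * Phi21 q (y / x) 0 (y * w) (x * t) := by
  obtain ⟨D, hD, hd⟩ := cauchy_bdd hq1 y hx
  have hs := (gen_summable hq1 hxt hxw _ D hd).of_norm
  simp only [vHH hq1]
  rw [← tsum_anti hs, hs.tsum_prod, Phi21, ← tsum_mul_left]
  refine tsum_congr fun n => ?_
  have e : ∀ m, cauchyP q x y (n + m) * ee q t n * ee q w m =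
      (qPoch q (y / x) n * ee q (x * t) n) * (qPoch q (y / x * q ^ n) m * ee q (x * w) m) := by
    intro m
    rw [cauchy_eq q y hx, qP_add, mul_comm x t, mul_comm x w, ee_mul, ee_mul]
    ring
  simp only [e]
  rw [tsum_mul_left, qbin hq1 _ _ hxw, ← qInf_split hq1 (y * w) n,
    show y / x * q ^ n * (x * w) = y * w * q ^ n by field_simp]
  have h1 := qP_ne q (y * w) n hyw
  have h2 := qq_ne hq1 n
  have h3 := qInf_ne hq1 (x * w) (qne_one_of_lt hq1 hxw)
  have h4 : qPoch q 0 n = 1 := by simp [qPoch]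
  rw [h4, ee]
  field_simp

def UU (q : ℂ) (r s : ℤ) (α z a : ℂ) (k : ℕ) : ℂ :=
  q ^ ((k : ℂ) * α) * q ^ (r * (k.choose 2 : ℤ) - s * ((k + 1).choose 2 : ℤ)) *
    (qPoch q (-(q ^ (-α))) k * qPoch q a k * z ^ k / (qPoch q (-q) k * qPoch q q k))

lemma super_summable {Q c : ℝ} (hQ0 : 0 < Q) (hQ : Q < 1) (hc : 0 < c) :
    Summable (fun k : ℕ => c ^ k * Q ^ (k.choose 2)) := by
  refine summable_of_ratio_test_tendsto_lt_one (l := 0) one_pos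
    (Eventually.of_forall fun n => by positivity) ?_
  have h0 : Tendsto (fun n : ℕ => c * Q ^ n) atTop (𝓝 (c * 0)) :=
    (tendsto_pow_atTop_nhds_zero_of_lt_one hQ0.le hQ).const_mul c
  rw [mul_zero] at h0
  refine h0.congr fun n => ?_
  rw [Real.norm_of_nonneg (by positivity), Real.norm_of_nonneg (by positivity),
    Nat.choose_succ_succ' n 1, Nat.choose_one_right, pow_add Q, pow_succ]
  field_simp

lemma UU_bdd {q : ℂ} (hq0 : q ≠ 0) (hq1 : ‖q‖ < 1) (r s : ℤ) (hrs : s < r) (α z a : ℂ)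
    (c : ℝ) (hc : 0 < c) : Summable (fun k => ‖UU q r s α z a k‖ * c ^ k) := by
  obtain ⟨C1, hC1, h1⟩ := qP_bdd hq1 (-(q ^ (-α)))
  obtain ⟨C2, hC2, h2⟩ := qP_bdd hq1 a
  obtain ⟨C3, hC3, h3⟩ := qP_inv_bdd hq1 (-q) (qne_one_of_lt hq1 (by simpa using hq1))
  obtain ⟨C4, hC4, h4⟩ := qP_inv_bdd hq1 q (qne_one_of_lt hq1 hq1)
  have hqn : 0 < ‖q‖ := norm_pos_iff.mpr hq0
  have hQ0 : 0 < ‖q ^ (r - s)‖ := norm_pos_iff.mpr (zpow_ne_zero _ hq0)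
  have hQ : ‖q ^ (r - s)‖ < 1 := by
    rw [norm_zpow]
    obtain ⟨d, hd⟩ := Int.eq_ofNat_of_zero_le (show 0 ≤ r - s by omega)
    rw [hd, zpow_natCast]
    exact pow_lt_one₀ hqn.le hq1 (by omega)
  set d : ℝ := ‖q ^ α‖ * ‖q ^ (-s)‖ * (‖z‖ + 1) * c with hd
  have hd0 : 0 < d := by
    have : 0 < ‖q ^ α‖ := norm_pos_iff.mpr (by simp [Complex.cpow_eq_zero_iff, hq0])
    have : 0 < ‖q ^ (-s)‖ := norm_pos_iff.mpr (zpow_ne_zero _ hq0)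
    positivity
  refine Summable.of_nonneg_of_le (fun _ => by positivity) (fun k => ?_)
    ((super_summable hQ0 hQ hd0).mul_left (C1 * C2 * C3 * C4))
  have e1 : q ^ ((k : ℂ) * α) = (q ^ α) ^ k := by
    rw [mul_comm, Complex.cpow_mul_nat]
  have e2 : q ^ (r * (k.choose 2 : ℤ) - s * ((k + 1).choose 2 : ℤ)) =
      (q ^ (r - s)) ^ (k.choose 2) * (q ^ (-s)) ^ k := by
    rw [← zpow_natCast, ← zpow_natCast, ← zpow_mul, ← zpow_mul, ← zpow_add₀ hq0,
      Nat.choose_succ_succ' k 1, Nat.choose_one_right]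
    congr 1
    push_cast
    ring
  rw [UU, e1, e2, div_eq_mul_inv, mul_inv]
  simp only [norm_mul, norm_pow]
  calc _ ≤ ‖q ^ α‖ ^ k * (‖q ^ (r - s)‖ ^ k.choose 2 * ‖q ^ (-s)‖ ^ k) *
      (C1 * C2 * (‖z‖ + 1) ^ k * (C3 * C4)) * c ^ k := by
        gcongr
        · exact h1 k
        · exact h2 k
        · linarith
        · exact h3 k
        · exact h4 k
    _ = _ := by rw [hd, mul_pow, mul_pow, mul_pow]; ring

lemma Ltil_eq {q : ℂ} (hq0 : q ≠ 0) (hq1 : ‖q‖ < 1) (r s : ℤ) (α x y z a : ℂ) (N : ℕ) :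
    Ltil q r s α x y z a N = qPoch q q N * ∑ p ∈ antidiagonal N,
      UU q r s α z a p.1 * (cauchyP q x y p.2 / qPoch q q p.2) := by
  rw [Finset.Nat.sum_antidiagonal_eq_sum_range_succ
    (fun k M => UU q r s α z a k * (cauchyP q x y M / qPoch q q M)), Ltil, Finset.mul_sum]
  refine Finset.sum_congr rfl fun k hk => ?_
  have h1 := qq_ne hq1 k
  have h2 := qq_ne hq1 (N - k)
  have h3 := qP_ne q (-q) k (qne_one_of_lt hq1 (by simpa using hq1))
  rw [qBinom, genQBinom, UU, Complex.cpow_sub _ _ hq0, Complex.cpow_natCast, zpow_add₀ hq0,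
    zpow_natCast, mul_comm α]
  field_simp

lemma Ltil_bdd {q : ℂ} (hq0 : q ≠ 0) (hq1 : ‖q‖ < 1) (r s : ℤ) (hrs : s < r) (α : ℂ) {x : ℂ}
    (hx : x ≠ 0) (y z a : ℂ) :
    ∃ D : ℝ, ∀ N, ‖Ltil q r s α x y z a N‖ ≤ D * ‖x‖ ^ N := by
  obtain ⟨C1, hC1, h1⟩ := qP_bdd hq1 q
  obtain ⟨C2, hC2, h2⟩ := cauchy_bdd hq1 y hx
  obtain ⟨C4, hC4, h4⟩ := qP_inv_bdd hq1 q (qne_one_of_lt hq1 hq1)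
  have hxn : 0 < ‖x‖ := norm_pos_iff.mpr hx
  have hU := UU_bdd hq0 hq1 r s hrs α z a (‖x‖⁻¹) (by positivity)
  refine ⟨C1 * ((C2 * C4) * ∑' k, ‖UU q r s α z a k‖ * ‖x‖⁻¹ ^ k), fun N => ?_⟩
  rw [Ltil_eq hq0 hq1, norm_mul, mul_assoc]
  have hb : ‖∑ p ∈ antidiagonal N,
      UU q r s α z a p.1 * (cauchyP q x y p.2 / qPoch q q p.2)‖ ≤
      (C2 * C4) * (∑' k, ‖UU q r s α z a k‖ * ‖x‖⁻¹ ^ k) * ‖x‖ ^ N := by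
    calc _ ≤ ∑ p ∈ antidiagonal N,
          (C2 * C4) * (‖UU q r s α z a p.1‖ * ‖x‖⁻¹ ^ p.1) * ‖x‖ ^ N := by
          refine norm_sum_le_of_le _ fun p hp => ?_
          rw [← mem_antidiagonal.mp hp, norm_mul, div_eq_mul_inv, norm_mul]
          calc _ ≤ ‖UU q r s α z a p.1‖ * ((C2 * ‖x‖ ^ p.2) * C4) := by
                gcongr
                · exact h2 _
                · exact h4 _
            _ = _ := by rw [pow_add, inv_pow]; field_simp
      _ = (C2 * C4) * (∑ k ∈ range (N+1), ‖UU q r s α z a k‖ * ‖x‖⁻¹ ^ k) * ‖x‖ ^ N := by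
          rw [Finset.Nat.sum_antidiagonal_eq_sum_range_succ
            (fun k _ => (C2 * C4) * (‖UU q r s α z a k‖ * ‖x‖⁻¹ ^ k) * ‖x‖ ^ N),
            Finset.mul_sum, Finset.sum_mul]
      _ ≤ _ := by
          gcongr
          exact hU.sum_le_tsum _ (fun _ _ => by positivity)
  exact mul_le_mul (h1 N) hb (norm_nonneg _) hC1.le

lemma HH_bdd {q : ℂ} (hq1 : ‖q‖ < 1) (t w : ℂ) : ∃ D : ℝ, 0 < D ∧
    ∀ N : ℕ, ‖HH q t w N‖ ≤ D * ((N + 1) * (max ‖t‖ ‖w‖) ^ N) := by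
  obtain ⟨C1, hC1, h1⟩ := qP_bdd hq1 q
  obtain ⟨E, hE, he⟩ := ee_bdd hq1
  refine ⟨C1 * (E * E), by positivity, fun N => ?_⟩
  rw [HH, norm_mul, mul_assoc]
  refine mul_le_mul (h1 N) ?_ (norm_nonneg _) hC1.le
  rw [RR]
  calc _ ≤ ∑ p ∈ antidiagonal N, (E * E) * (max ‖t‖ ‖w‖) ^ N := by
        refine norm_sum_le_of_le _ fun p hp => ?_
        rw [← mem_antidiagonal.mp hp, mul_one, norm_mul]
        calc _ ≤ (E * ‖t‖ ^ p.1) * (E * ‖w‖ ^ p.2) := by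
              gcongr
              · exact he _ _
              · exact he _ _
          _ ≤ (E * (max ‖t‖ ‖w‖) ^ p.1) * (E * (max ‖t‖ ‖w‖) ^ p.2) := by
              gcongr
              · exact le_max_left _ _
              · exact le_max_right _ _
          _ = _ := by rw [pow_add]; ring
    _ = _ := by
        rw [Finset.sum_const, Finset.Nat.card_antidiagonal, nsmul_eq_mul]; push_cast; ring

lemma main_summable {q : ℂ} (hq0 : q ≠ 0) (hq1 : ‖q‖ < 1) (r s : ℤ) (hrs : s < r) (α : ℂ) {x : ℂ}
    (hx : x ≠ 0) (y z a : ℂ) {t w : ℂ} (hw : w ≠ 0) (hxt : ‖x * t‖ < 1) (hxw : ‖x * w‖ < 1) :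
    Summable (fun p : ℕ × ℕ => UU q r s α z a p.1 *
      (cauchyP q x y p.2 / qPoch q q p.2 * HH q t w (p.1 + p.2))) := by
  obtain ⟨C2, hC2, h2⟩ := cauchy_bdd hq1 y hx
  obtain ⟨C4, hC4, h4⟩ := qP_inv_bdd hq1 q (qne_one_of_lt hq1 hq1)
  obtain ⟨C, hC, h⟩ := HH_bdd hq1 t w
  have hσ : 0 < max ‖t‖ ‖w‖ := lt_max_of_lt_right (norm_pos_iff.mpr hw)
  have hρ : ‖x‖ * max ‖t‖ ‖w‖ < 1 := by
    rw [norm_mul] at hxt hxw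
    rcases max_choice ‖t‖ ‖w‖ with h | h <;> rw [h] <;> assumption
  set σ := max ‖t‖ ‖w‖
  have hU := UU_bdd hq0 hq1 r s hrs α z a (2 * σ) (by positivity)
  have hV : Summable (fun M : ℕ => ((M : ℝ) + 1) * (‖x‖ * σ) ^ M) := by
    have hn : ‖(‖x‖ * σ)‖ < 1 := by rwa [Real.norm_of_nonneg (by positivity)]
    have := (summable_pow_mul_geometric_of_norm_lt_one 1 hn).add
      (summable_geometric_of_lt_one (by positivity) hρ)
    refine this.congr fun M => by ring
  refine Summable.of_norm_bounded ((hU.mul_of_nonneg hV (fun _ => by positivity)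
    (fun _ => by positivity)).mul_left (C2 * C4 * C)) fun p => ?_
  rw [norm_mul, norm_mul, div_eq_mul_inv, norm_mul]
  have hk : ((p.1 + p.2 : ℕ) + 1 : ℝ) ≤ 2 ^ p.1 * (p.2 + 1) := by
    have : ((p.1 : ℝ) + 1) ≤ 2 ^ p.1 := by exact_mod_cast Nat.lt_two_pow_self (n := p.1)
    push_cast
    nlinarith [Nat.cast_nonneg (α := ℝ) p.1, Nat.cast_nonneg (α := ℝ) p.2,
      mul_nonneg (Nat.cast_nonneg (α := ℝ) p.1) (Nat.cast_nonneg (α := ℝ) p.2)]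
  calc _ ≤ ‖UU q r s α z a p.1‖ * ((C2 * ‖x‖ ^ p.2) * C4 *
        (C * ((2 ^ p.1 * (p.2 + 1)) * σ ^ (p.1 + p.2)))) := by
        have h' := h (p.1 + p.2)
        gcongr
        · exact h2 _
        · exact h4 _
        · refine h'.trans ?_
          gcongr
    _ = _ := by simp only [mul_pow, pow_add]; ring

/-- Rogers formula for the generalized q-polynomials. -/
theorem stmt6 (q : ℂ) (hq0 : q ≠ 0) (hq1 : ‖q‖ < 1) (α a x y z t ω : ℂ) (r s : ℤ)
    (hrs : s < r) (hω : ω ≠ 0) (hx : x ≠ 0) (hxω : ‖x * ω‖ < 1) (hxt : ‖x * t‖ < 1)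
    (hyω : ∀ m : ℕ, y * ω * q ^ m ≠ 1) :
    Summable (fun p : ℕ × ℕ => ‖Ltil q r s α x y z a (p.1 + p.2) *
        (t ^ p.1 / qPoch q q p.1) * (ω ^ p.2 / qPoch q q p.2)‖) ∧
    ∑' p : ℕ × ℕ, Ltil q r s α x y z a (p.1 + p.2) *
        (t ^ p.1 / qPoch q q p.1) * (ω ^ p.2 / qPoch q q p.2) =
      qPochInf q (y * ω) / qPochInf q (x * ω) *
        ∑' k : ℕ, ∑ j ∈ Finset.range (k + 1),
          q ^ ((k : ℂ) * α) * q ^ (r * (k.choose 2 : ℤ) - s * ((k + 1).choose 2 : ℤ)) *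
            (qPoch q (-(q ^ (-α))) k * qPoch q a k * (ω * z) ^ k /
              (qPoch q (-q) k * qPoch q q (k - j))) *
            (qPoch q (x * ω) j * (t / ω) ^ j / (qPoch q (y * ω) j * qPoch q q j)) *
            Phi21 q (y / x) 0 (y * ω * q ^ j) (x * t) := by
  obtain ⟨D, hD⟩ := Ltil_bdd hq0 hq1 r s hrs α hx y z a
  have hS := gen_summable hq1 hxt hxω _ D hD
  refine ⟨hS, ?_⟩
  have hM := main_summable hq0 hq1 r s hrs α hx y z a hω hxt hxω
  have step1 : ∑' p : ℕ × ℕ, Ltil q r s α x y z a (p.1 + p.2) * ee q t p.1 * ee q ω p.2 =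
      ∑' k, UU q r s α z a k *
        ∑' M, cauchyP q x y M / qPoch q q M * HH q t ω (k + M) := by
    rw [tsum_anti hS.of_norm]
    simp only [← tsum_mul_left]
    rw [← hM.tsum_prod, tsum_anti hM]
    refine tsum_congr fun N => ?_
    calc _ = Ltil q r s α x y z a N * RR q t (fun _ => 1) ω N := by
          rw [RR, Finset.mul_sum]
          refine Finset.sum_congr rfl fun p hp => ?_
          rw [mem_antidiagonal.mp hp]; ring
      _ = (∑ p ∈ antidiagonal N,
            UU q r s α z a p.1 * (cauchyP q x y p.2 / qPoch q q p.2)) * HH q t ω N := by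
          rw [Ltil_eq hq0 hq1, HH]; ring
      _ = _ := by
          rw [Finset.sum_mul]
          refine Finset.sum_congr rfl fun p hp => ?_
          rw [mem_antidiagonal.mp hp]; ring
  refine step1.trans ?_
  rw [← tsum_mul_left]
  refine tsum_congr fun k => ?_
  have hw' : ∀ j : ℕ, ‖x * (ω * q ^ j)‖ < 1 := fun j => by
    rw [← mul_assoc]; exact (norm_mul_qpow hq1 _ j).trans_lt hxω
  have e1 : ∑' M, cauchyP q x y M / qPoch q q M * HH q t ω (k + M) =
      ∑ p ∈ antidiagonal k, qPoch q q k * (ee q t p.1 * ee q ω p.2) *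
        ∑' M, cauchyP q x y M / qPoch q q M * HH q t (ω * q ^ p.1) M := by
    simp only [← tsum_mul_left]
    rw [← Summable.tsum_finsetSum]
    · refine tsum_congr fun M => ?_
      rw [HH_add hq1, RR, Finset.mul_sum, Finset.mul_sum]
      refine Finset.sum_congr rfl fun p hp => by ring
    · intro p _
      exact (GG_summable hq1 hx hxt (hw' p.1)).mul_left _
  rw [e1, Finset.Nat.sum_antidiagonal_eq_sum_range_succ (fun j i =>
    qPoch q q k * (ee q t j * ee q ω i) *
        ∑' M, cauchyP q x y M / qPoch q q M * HH q t (ω * q ^ j) M), Finset.mul_sum,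
    Finset.mul_sum]
  refine Finset.sum_congr rfl fun j hj => ?_
  have hjk : j ≤ k := Nat.lt_succ_iff.mp (Finset.mem_range.mp hj)
  rw [GG hq1 hx hxt (hw' j) (fun m => by
    rw [← mul_assoc, mul_assoc (y * ω), ← pow_add]; exact hyω _)]
  rw [← mul_assoc y, ← mul_assoc x, ← qInf_split hq1 (y * ω) j, ← qInf_split hq1 (x * ω) j]
  have h1 := qP_ne q (y * ω) j hyω
  have h2 := qP_ne q (x * ω) j (qne_one_of_lt hq1 hxω)
  have h3 := qInf_ne hq1 (x * ω * q ^ j) (qne_one_of_lt hq1 (by rw [mul_assoc]; exact hw' j))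
  have h4 := qq_ne hq1 j
  have h5 := qq_ne hq1 (k - j)
  have h6 := qq_ne hq1 k
  have h7 := qP_ne q (-q) k (qne_one_of_lt hq1 (by simpa using hq1))
  have h8 : (ω * z) ^ k * (t / ω) ^ j = z ^ k * t ^ j * ω ^ (k - j) := by
    rw [mul_pow, div_pow, ← Nat.sub_add_cancel hjk, pow_add ω, Nat.add_sub_cancel]
    field_simp
  rw [UU, ee, ee]
  generalize qPoch q (y * ω) j = A5 at h1 ⊢
  generalize Phi21 q (y / x) 0 (y * ω * q ^ j) (x * t) = P
  generalize q ^ ((k : ℂ) * α) = A1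
  generalize q ^ (r * (k.choose 2 : ℤ) - s * ((k + 1).choose 2 : ℤ)) = A2
  generalize qPoch q (-(q ^ (-α))) k = A3
  generalize qPochInf q (y * ω * q ^ j) = A4
  have h9 : ∀ X Y : ℂ, X * ((ω * z) ^ k) * (Y * (t / ω) ^ j) =
     X * Y * (z ^ k * t ^ j * ω ^ (k - j)) := fun X Y => by rw [← h8]; ring
  calc _ = A1 * A2 * (A3 * qPoch q a k / (qPoch q (-q) k * qPoch q q (k - j))) *
      (1 / (qPoch q q j)) * A4 / qPochInf q (x * ω * q ^ j) * P *
        (z ^ k * t ^ j * ω ^ (k - j)) := by field_simp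
    _ = _ := by
      rw [← h8]
      generalize (t / ω) ^ j = B1
      generalize (ω * z) ^ k = B2
      field_simp

end
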